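/- arXiv:2009.03837 — 6 statements merged into one kernel-verified Lean document; each statement's English description precedes it below -/
import Mathlib

section
/- Let A be a ring and Q a projective left A-module. Suppose that Hom_A(Q, -) commutes with arbitrary direct sums, i.e., for every family (M_j)_{j ∈ J} of left A-modules the canonical map ⊕_{j ∈ J} Hom_A(Q, M_j) → Hom_A(Q, ⊕_{j ∈ J} M_j) is bijective. Then Q is finitely generated. -/
open DirectSum

universe u

/-- If `Q` is a projective left `A`-module such that `Hom_A(Q, -)` commutes with arbitrary
direct sums (i.e. for every family `(M j)` of left `A`-modules, the canonical map
`⊕_j Hom_A(Q, M j) → Hom_A(Q, ⊕_j M j)`, sending a finitely supported family `(f_j)` to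
`q ↦ (f_j q)_j`, is bijective), then `Q` is finitely generated. -/
theorem projective_finite_of_hom_commutes_with_directSum
    {A : Type u} [Ring A] {Q : Type u} [AddCommGroup Q] [Module A Q]
    (hproj : Module.Projective A Q)
    (hcomm : ∀ (J : Type u) [DecidableEq J] (M : J → Type u)
      [∀ j, AddCommGroup (M j)] [∀ j, Module A (M j)],
      Function.Bijective
        (DFinsupp.sumAddHom (β := fun j => Q →ₗ[A] M j)
          (γ := Q →ₗ[A] ⨁ j, M j)
          (fun j => AddMonoidHom.mk'
            (fun g => (DirectSum.lof A J M j) ∘ₗ g)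
            (fun g₁ g₂ => by ext q; simp)))) :
    Module.Finite A Q := by
  classical
  let p : (⨁ _ : Q, A) →ₗ[A] Q :=
    DirectSum.toModule A Q Q (fun j => LinearMap.toSpanSingleton A Q j)
  have hp : Function.Surjective p := fun q =>
    ⟨DirectSum.lof A Q (fun _ => A) q 1, by simp [p, DirectSum.toModule_lof]⟩
  obtain ⟨s, hs⟩ := Module.projective_lifting_property p LinearMap.id hp
  obtain ⟨f, hf⟩ := (hcomm Q (fun _ => A)).2 s
  have key : ∃ S : Finset Q, ∀ q, p (s q) ∈ Submodule.span A (S : Set Q) := by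
    rw [← hf]
    clear hf
    induction f using DFinsupp.induction with
    | h0 => exact ⟨∅, fun q => by simp⟩
    | ha i b f _ _ ih =>
      obtain ⟨S, hS⟩ := ih
      refine ⟨insert i S, fun q => ?_⟩
      rw [map_add, LinearMap.add_apply, map_add]
      refine add_mem ?_ (Submodule.span_mono (by simp) (hS q))
      rw [DFinsupp.sumAddHom_single]
      have : p (DirectSum.lof A Q (fun _ => A) i (b q)) = b q • i := by
        simp [p, DirectSum.toModule_lof]
      simp only [AddMonoidHom.mk'_apply, LinearMap.comp_apply]
      rw [this]
      exact Submodule.smul_mem _ _ (Submodule.subset_span (by simp))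
  obtain ⟨S, hS⟩ := key
  refine ⟨⟨S, eq_top_iff.2 fun q _ => ?_⟩⟩
  have h := hS q
  rwa [← LinearMap.comp_apply, hs] at h
end

section
/- Let C be an abelian category, let I be an h-injective cochain complex in C, and let s : X → Y be a quasi-isomorphism of cochain complexes in C. Then precomposition with s induces a bijection from the set of homotopy classes of cochain maps Y → I to the set of homotopy classes of cochain maps X → I. -/
open CategoryTheory Limits

universe v u

/-- A cochain complex `I` is h-injective if every cochain map from an acyclic complex
to `I` is homotopic to zero. -/
def CochainComplex.IsHInjective {C : Type u} [Category.{v} C] [Abelian C]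
    (I : CochainComplex C ℤ) : Prop :=
  ∀ (X : CochainComplex C ℤ), (∀ n : ℤ, IsZero (X.homology n)) →
    ∀ f : X ⟶ I, Nonempty (Homotopy f 0)

/-- If `I` is h-injective and `s : X ⟶ Y` is a quasi-isomorphism, then precomposition
with `s` induces a bijection on homotopy classes of maps into `I`. -/
theorem CochainComplex.bijective_precomp_of_quasiIso_of_isHInjective
    {C : Type u} [Category.{v} C] [Abelian C] {I X Y : CochainComplex C ℤ}
    (hI : I.IsHInjective) (s : X ⟶ Y) [QuasiIso s] :
    Function.Bijective (fun g :
        ((HomotopyCategory.quotient C (ComplexShape.up ℤ)).obj Y ⟶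
          (HomotopyCategory.quotient C (ComplexShape.up ℤ)).obj I) =>
      (HomotopyCategory.quotient C (ComplexShape.up ℤ)).map s ≫ g) := by
  have hK : I.IsKInjective :=
    ⟨fun {K} f hf => hI K (fun n => (hf n).isZero_homology) f⟩
  have h := CochainComplex.IsKInjective.rightOrthogonal I
  rw [← ObjectProperty.isLocal_trW, ← HomotopyCategory.quasiIso_eq_trW_subcategoryAcyclic] at h
  refine h _ ?_
  rw [HomotopyCategory.quotient_map_mem_quasiIso_iff, HomologicalComplex.mem_quasiIso_iff]
  infer_instance
end

section
/- Let S and T be pretriangulated categories admitting arbitrary small coproducts, let F₁, F₂ : S → T be triangulated (exact) functors commuting with the shift and preserving arbitrary small coproducts, and let τ : F₁ → F₂ be a natural transformation compatible with the shift isomorphisms. Let C be an object of S that generates S in the following sense: every strictly full triangulated subcategory of S that is closed under arbitrary small coproducts and contains C is equal to S. If τ_C is an isomorphism, then τ_Y is an isomorphism for every object Y of S. -/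
open CategoryTheory Limits Pretriangulated

universe w v₁ v₂ u₁ u₂

/-- Let `F₁, F₂` be triangulated functors between pretriangulated categories with small
coproducts, both preserving small coproducts, and let `τ : F₁ ⟶ F₂` be a natural
transformation compatible with the shifts. If `C` is a compact-type generator of `S`
(in the sense that every strictly full triangulated subcategory closed under small
coproducts and containing `C` is all of `S`) and `τ` is an isomorphism at `C`, then
`τ` is an isomorphism everywhere. -/
theorem natTrans_isIso_of_isIso_on_generator
    {S : Type u₁} {T : Type u₂} [Category.{v₁} S] [Category.{v₂} T]
    [HasZeroObject S] [HasZeroObject T] [Preadditive S] [Preadditive T]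
    [HasShift S ℤ] [HasShift T ℤ]
    [∀ n : ℤ, (shiftFunctor S n).Additive] [∀ n : ℤ, (shiftFunctor T n).Additive]
    [Pretriangulated S] [Pretriangulated T]
    [HasCoproducts.{w} S] [HasCoproducts.{w} T]
    (F₁ F₂ : S ⥤ T) [F₁.CommShift ℤ] [F₂.CommShift ℤ]
    [F₁.IsTriangulated] [F₂.IsTriangulated]
    [∀ J : Type w, PreservesColimitsOfShape (Discrete J) F₁]
    [∀ J : Type w, PreservesColimitsOfShape (Discrete J) F₂]
    (τ : F₁ ⟶ F₂) [NatTrans.CommShift τ ℤ]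
    (C : S)
    (hgen : ∀ P : S → Prop,
      (∀ {X Y : S}, (X ≅ Y) → P X → P Y) →
      (∀ X : S, IsZero X → P X) →
      (∀ X : S, P X → P (X⟦(1 : ℤ)⟧)) →
      (∀ X : S, P X → P (X⟦(-1 : ℤ)⟧)) →
      (∀ Tr ∈ distTriang S, P Tr.obj₁ → P Tr.obj₂ → P Tr.obj₃) →
      (∀ {J : Type w} (X : J → S), (∀ j, P (X j)) → P (∐ X)) →
      P C → ∀ X : S, P X)
    (hτC : IsIso (τ.app C)) :
    ∀ Y : S, IsIso (τ.app Y) := by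
  have hsh : ∀ (n : ℤ) (X : S), IsIso (τ.app X) → IsIso (τ.app (X⟦n⟧)) := by
    intro n X hX
    rw [NatTrans.app_shift τ n X]
    infer_instance
  refine hgen (fun X => IsIso (τ.app X)) ?_ ?_ (hsh 1) (hsh (-1)) ?_ ?_ hτC
  · intro X Y e hX
    exact (NatTrans.isIso_app_iff_of_iso τ e).1 hX
  · intro X hX
    have h₁ : IsZero (F₁.obj X) := F₁.map_isZero hX
    have h₂ : IsZero (F₂.obj X) := F₂.map_isZero hX
    exact ⟨0, h₁.eq_of_src _ _, h₂.eq_of_src _ _⟩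
  · intro Tr hTr h₁ h₂
    let φ : F₁.mapTriangle.obj Tr ⟶ F₂.mapTriangle.obj Tr :=
      { hom₁ := τ.app _
        hom₂ := τ.app _
        hom₃ := τ.app _
        comm₁ := τ.naturality _
        comm₂ := τ.naturality _
        comm₃ := by
          have h := NatTrans.shift_app_comm τ (1 : ℤ) Tr.obj₁
          have h' : (F₁.map Tr.mor₃ ≫ (F₁.commShiftIso (1 : ℤ)).hom.app Tr.obj₁) ≫
              (τ.app Tr.obj₁)⟦(1 : ℤ)⟧' =
              τ.app Tr.obj₃ ≫ F₂.map Tr.mor₃ ≫ (F₂.commShiftIso (1 : ℤ)).hom.app Tr.obj₁ := by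
            rw [Category.assoc, h, ← Category.assoc, τ.naturality, Category.assoc]
          exact h' }
    exact isIso₃_of_isIso₁₂ φ (F₁.map_distinguished _ hTr) (F₂.map_distinguished _ hTr) h₁ h₂
  · intro J X hX
    have h : sigmaComparison F₁ X ≫ τ.app (∐ X) =
        Limits.Sigma.map (fun j => τ.app (X j)) ≫ sigmaComparison F₂ X := by
      apply Limits.Sigma.hom_ext
      intro j
      simp
    have : ∀ j, IsIso (τ.app (X j)) := hX
    have : IsIso (sigmaComparison F₁ X ≫ τ.app (∐ X)) := by
      rw [h]
      infer_instance
    exact IsIso.of_isIso_comp_left (sigmaComparison F₁ X) _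
end

section
/- Let C be a Grothendieck abelian category. Then the unbounded derived category D(C) admits arbitrary small products. -/
open CategoryTheory Limits

universe w v u

namespace DerivedProducts

section Products

variable {C : Type u} [Category.{v} C] [Abelian C]

/-- A product of K-injective complexes is K-injective; more generally, a map to a product
is null-homotopic if all its components are. -/
lemma homotopy_of_components {J : Type v} {I : J → CochainComplex C ℤ}
    [HasProductsOfShape J C]
    {K : CochainComplex C ℤ} (f : K ⟶ ∏ᶜ I)
    (hf : ∀ j, Nonempty (Homotopy (f ≫ Pi.π I j) 0)) : Nonempty (Homotopy f 0) := by
  let h := fun j => (hf j).some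
  have hl (n : ℤ) := isLimitOfPreserves (HomologicalComplex.eval C (ComplexShape.up ℤ) n)
    (limit.isLimit (Discrete.functor I))
  have ex (i j : ℤ) : ∃ g : K.X i ⟶ (∏ᶜ I).X j, ∀ a, g ≫ (Pi.π I a).f j = (h a).hom i j := by
    refine ⟨(hl j).lift ⟨K.X i, Discrete.natTrans (fun a => (h a.as).hom i j)⟩, fun a => ?_⟩
    exact (hl j).fac _ ⟨a⟩
  choose g hg using ex
  have ext' {T : C} {n : ℤ} (x y : T ⟶ (∏ᶜ I).X n)
      (hxy : ∀ a, x ≫ (Pi.π I a).f n = y ≫ (Pi.π I a).f n) : x = y :=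
    (hl n).hom_ext (fun ⟨a⟩ => hxy a)
  refine ⟨{ hom := g, zero := ?_, comm := ?_ }⟩
  · intro i j hij
    apply ext'
    intro a
    rw [hg, (h a).zero i j hij, zero_comp]
  · intro i
    apply ext'
    intro a
    have := (h a).comm i
    simp only [HomologicalComplex.comp_f] at this
    rw [this]
    simp [dNext, prevD, Preadditive.add_comp, hg, ← HomologicalComplex.Hom.comm, reassoc_of% hg]

lemma hasProducts_of_enough [HasLimitsOfSize.{v, v} C] [HasDerivedCategory.{w} C]
    (hC : ∀ X : CochainComplex C ℤ, ∃ (I : CochainComplex C ℤ) (i : X ⟶ I),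
      QuasiIso i ∧ I.IsKInjective) :
    HasProducts.{v} (DerivedCategory C) := by
  have key (X : DerivedCategory C) : ∃ I : CochainComplex C ℤ, I.IsKInjective ∧
      Nonempty (DerivedCategory.Q.obj I ≅ X) := by
    obtain ⟨I, i, hi, hI⟩ := hC (DerivedCategory.Q.objPreimage X)
    exact ⟨I, hI, ⟨(asIso (DerivedCategory.Q.map i)).symm ≪≫ DerivedCategory.Q.objObjPreimageIso X⟩⟩
  have surj (K L : CochainComplex C ℤ) [L.IsKInjective]
      (g : DerivedCategory.Q.obj K ⟶ DerivedCategory.Q.obj L) :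
      ∃ g', DerivedCategory.Q.map g' = g := by
    obtain ⟨x, hx⟩ := (CochainComplex.IsKInjective.Qh_map_bijective
      ((HomotopyCategory.quotient _ _).obj K) L).surjective
      ((DerivedCategory.quotientCompQhIso C).hom.app K ≫ g ≫
        (DerivedCategory.quotientCompQhIso C).inv.app L)
    obtain ⟨x, rfl⟩ := (HomotopyCategory.quotient _ _).map_surjective x
    refine ⟨x, ?_⟩
    have := (DerivedCategory.quotientCompQhIso C).hom.naturality x
    dsimp at this
    rw [hx] at this
    simpa using this.symm
  have inj (K L : CochainComplex C ℤ) [L.IsKInjective] (g : K ⟶ L)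
      (hg : DerivedCategory.Q.map g = 0) : Nonempty (Homotopy g 0) := by
    refine ⟨HomotopyCategory.homotopyOfEq _ _ ?_⟩
    apply (CochainComplex.IsKInjective.Qh_map_bijective
      ((HomotopyCategory.quotient _ _).obj K) L).injective
    have := (DerivedCategory.quotientCompQhIso C).hom.naturality g
    rw [hg, comp_zero] at this
    have h2 := (Preadditive.IsIso.comp_right_eq_zero _ _).1 this
    simpa using h2
  have zero_of (K L : CochainComplex C ℤ) (g : K ⟶ L) (h : Homotopy g 0) :
      DerivedCategory.Q.map g = 0 := by
    have := (DerivedCategory.quotientCompQhIso C).hom.naturality g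
    dsimp at this
    rw [HomotopyCategory.eq_of_homotopy _ _ h, Functor.map_zero, Functor.map_zero, zero_comp] at this
    exact (Preadditive.IsIso.comp_left_eq_zero _ _).1 this.symm
  intro J
  refine ⟨fun F => ?_⟩
  choose I hI e using fun j : J => key (F.obj ⟨j⟩)
  have hP : (∏ᶜ I).IsKInjective := ⟨fun {K} f hK => homotopy_of_components f
    (fun j => CochainComplex.IsKInjective.nonempty_homotopy_zero _ hK)⟩
  let c : Fan (fun j => DerivedCategory.Q.obj (I j)) :=
    Fan.mk (DerivedCategory.Q.obj (∏ᶜ I)) (fun j => DerivedCategory.Q.map (Pi.π I j))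
  have hc : Nonempty (IsLimit c) := by
    have lft (Z : DerivedCategory C) (g : ∀ j, Z ⟶ DerivedCategory.Q.obj (I j)) :
        ∃ l : Z ⟶ c.pt, ∀ j, l ≫ c.proj j = g j := by
      let e := DerivedCategory.Q.objObjPreimageIso Z
      choose g' hg' using fun j => surj _ _ (e.hom ≫ g j)
      refine ⟨e.inv ≫ DerivedCategory.Q.map (Pi.lift g'), fun j => ?_⟩
      simp [c, ← Functor.map_comp, hg']
    have uniq0 (Z : DerivedCategory C) (l : Z ⟶ c.pt) (hl : ∀ j, l ≫ c.proj j = 0) : l = 0 := by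
      let e := DerivedCategory.Q.objObjPreimageIso Z
      obtain ⟨l', hl'⟩ := surj _ (∏ᶜ I) (e.hom ≫ l)
      have : Nonempty (Homotopy l' 0) := homotopy_of_components _ (fun j => by
        apply inj
        have : l ≫ DerivedCategory.Q.map (Pi.π I j) = 0 := hl j
        rw [Functor.map_comp, hl', Category.assoc, this, comp_zero])
      have := zero_of _ _ _ this.some
      rw [hl'] at this
      exact (Preadditive.IsIso.comp_left_eq_zero _ _).1 this
    choose l hl using lft
    refine ⟨Fan.IsLimit.mk c (fun s => l s.pt s.proj) (fun s j => hl _ _ j) (fun s m hm => ?_)⟩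
    rw [← sub_eq_zero]
    apply uniq0
    intro j
    rw [Preadditive.sub_comp, hm, hl, sub_self]
  have : HasLimit (Discrete.functor (fun j => DerivedCategory.Q.obj (I j))) := ⟨⟨⟨c, hc.some⟩⟩⟩
  exact hasLimit_of_iso (F := Discrete.functor (fun j => DerivedCategory.Q.obj (I j)))
    (Discrete.natIso (fun ⟨j⟩ => (e j).some))

end Products

end DerivedProducts

namespace DerivedProducts

section AcyclicMono

open CochainComplex HomComplex
open scoped ZeroObject

variable {C : Type u} [Category.{v} C] [Abelian C]

/-- Monomorphisms of complexes which are quasi-isomorphisms. -/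
def acyclicMono (C : Type u) [Category.{v} C] [Abelian C] :
    MorphismProperty (CochainComplex C ℤ) := fun _ _ f => Mono f ∧ QuasiIso f

/-- Degreewise epimorphisms with injective kernels, whose kernel is K-injective. -/
def testMaps (C : Type u) [Category.{v} C] [Abelian C] :
    MorphismProperty (CochainComplex C ℤ) :=
  fun _ _ p => degreewiseEpiWithInjectiveKernel p ∧ (kernel p).IsKInjective

lemma acyclicMono_le_llp : acyclicMono C ≤ (testMaps C).llp := by
  intro A B i hi X Y p hp
  obtain ⟨hi, hi'⟩ := hi
  obtain ⟨hp, hp'⟩ := hp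
  refine ⟨fun {t b} sq => ?_⟩
  have sq' (n : ℤ) : CommSq (t.f n) (i.f n) (p.f n) (b.f n) :=
    (sq.map (HomologicalComplex.eval _ _ n))
  have (n : ℤ) : (sq' n).HasLift := by
    have := (hp n).hasLiftingProperty (i.f n)
    infer_instance
  let β : Cocycle (cokernel i) (kernel p) 1 :=
    Lifting.cocycle₁ sq (fun n ↦ ⟨(sq' n).lift, (sq' n).fac_left, (sq' n).fac_right⟩)
      (cokernelIsCokernel i) (kernelIsKernel p) (hπ := by simp) (hι := by simp)
  obtain ⟨α, hα⟩ : ∃ (α : Cochain (cokernel i) (kernel p) 0), δ 0 1 α = β.1 := by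
    refine IsKInjective.eq_δ_of_cocycle β ?_ 0 (by simp)
    have : (ShortComplex.mk _ _ (cokernel.condition i)).ShortExact :=
      { exact := ShortComplex.exact_cokernel i }
    exact this.acyclic_X₃ (by dsimp; infer_instance)
  exact Lifting.hasLift sq _ (cokernelIsCokernel _) (kernelIsKernel _) α hα

lemma quasiIso_of_acyclic {S : ShortComplex (CochainComplex C ℤ)} (hS : S.ShortExact)
    (h : S.X₃.Acyclic) : QuasiIso S.f := by
  rw [quasiIso_iff]
  intro n
  rw [quasiIsoAt_iff_isIso_homologyMap]
  have h3 (m : ℤ) : IsZero (S.X₃.homology m) :=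
    (HomologicalComplex.exactAt_iff_isZero_homology _ _).1 (h m)
  have : Mono (HomologicalComplex.homologyMap S.f n) :=
    (hS.homology_exact₁ (n - 1) n (by simp)).mono_g ((h3 _).eq_of_src _ _)
  have : Epi (HomologicalComplex.homologyMap S.f n) :=
    (hS.homology_exact₂ n).epi_f ((h3 _).eq_of_tgt _ _)
  exact isIso_of_mono_of_epi _

lemma kernel_isKInjective {X Y : CochainComplex C ℤ} (p : X ⟶ Y) (d : ℤ) [X.IsStrictlyGE d]
    (hp : degreewiseEpiWithInjectiveKernel p) : (kernel p).IsKInjective := by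
  have (n : ℤ) : Injective ((kernel p).X n) :=
    Injective.of_iso
      (asIso (kernelComparison p (HomologicalComplex.eval _ _ n))).symm (hp n).2
  have : (kernel p).IsStrictlyGE d := by
    rw [isStrictlyGE_iff]
    intro i hi
    rw [IsZero.iff_id_eq_zero, ← cancel_mono ((kernel.ι p).f i)]
    apply (X.isZero_of_isStrictlyGE d i).eq_of_tgt
  exact isKInjective_of_injective _ d

lemma quasiIso_of_llp [EnoughInjectives C] {A B : CochainComplex C ℤ} (i : A ⟶ B) [Mono i]
    (hi : (testMaps C).llp i) : QuasiIso i := by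
  have hS : (ShortComplex.mk _ _ (cokernel.condition i)).ShortExact :=
    { exact := ShortComplex.exact_cokernel i }
  refine quasiIso_of_acyclic hS (fun n => ?_)
  dsimp
  let K := cokernel i
  change K.ExactAt n
  rw [HomologicalComplex.exactAt_iff_isZero_homology]
  let j := Injective.ι (K.homology n)
  let ψ : K.opcycles n ⟶ _ := Injective.factorThru j (K.homologyι n)
  have hψ : K.homologyι n ≫ ψ = j := Injective.comp_factorThru _ _
  let uu : K ⟶ (HomologicalComplex.single C (ComplexShape.up ℤ) n).obj _ :=
    HomologicalComplex.mkHomToSingle (K.pOpcycles n ≫ ψ) (by simp)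
  obtain ⟨E, _, z, p, _, hz, hp, -⟩ := Plus.modelCategoryQuillen.cm5a
    (0 : (0 : CochainComplex C ℤ) ⟶ (HomologicalComplex.single C (ComplexShape.up ℤ) n).obj
      (Injective.under (K.homology n))) n
  have hl := hi p ⟨hp, kernel_isKInjective p n hp⟩
  have sq : CommSq (0 : A ⟶ E) i p (cokernel.π i ≫ uu) := ⟨by simp⟩
  let l' : K ⟶ E := cokernel.desc i sq.lift (by simp)
  have hl' : l' ≫ p = uu := by
    rw [← cancel_epi (cokernel.π i)]
    simp [l']
  have hE : IsZero (E.homology n) := by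
    have : IsZero ((0 : CochainComplex C ℤ).homology n) :=
      (HomologicalComplex.homologyFunctor C _ n).map_isZero (isZero_zero _)
    exact this.of_iso (asIso (HomologicalComplex.homologyMap z n)).symm
  have h0 : HomologicalComplex.homologyMap uu n = 0 := by
    rw [← hl', HomologicalComplex.homologyMap_comp, hE.eq_of_tgt (HomologicalComplex.homologyMap l' n) 0,
      zero_comp]
  have h1 : HomologicalComplex.opcyclesMap uu n = ψ ≫
      (HomologicalComplex.singleObjXSelf (ComplexShape.up ℤ) n _).inv ≫
      HomologicalComplex.pOpcycles _ n := by
    rw [← cancel_epi (K.pOpcycles n)]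
    simp [uu]
  have h2 := HomologicalComplex.homologyι_naturality uu n
  rw [h0, zero_comp, h1, reassoc_of% hψ] at h2
  have : IsIso (((HomologicalComplex.single C (ComplexShape.up ℤ) n).obj
      (Injective.under (K.homology n))).pOpcycles n) :=
    HomologicalComplex.isIso_pOpcycles _ (n - 1) n (by simp) (by simp)
  have h3 : j = 0 := by
    rw [← Category.assoc] at h2
    have := (Preadditive.IsIso.comp_right_eq_zero _ _).1 h2.symm
    exact (Preadditive.IsIso.comp_right_eq_zero _ _).1 this
  exact IsZero.of_mono_eq_zero j h3

/-- A complex with the right lifting property against acyclic monomorphisms is K-injective. -/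
lemma isKInjective_of_rlp (I : CochainComplex C ℤ)
    (hI : (acyclicMono C).rlp (0 : I ⟶ 0)) : I.IsKInjective where
  nonempty_homotopy_zero {K} f hK := by
    have hmono : Mono (mappingCone.inr (𝟙 K)) := by
      have (n : ℤ) : Mono ((mappingCone.inr (𝟙 K)).f n) :=
        mono_of_mono_fac (mappingCone.inr_f_snd_v (𝟙 K) n)
      exact HomologicalComplex.mono_of_mono_f _ this
    have hq : QuasiIso (mappingCone.inr (𝟙 K)) := by
      rw [quasiIso_iff]
      intro n
      rw [quasiIsoAt_iff_isIso_homologyMap]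
      have h₀ : Homotopy (𝟙 (mappingCone (𝟙 K))) 0 :=
        mappingCone.liftHomotopy _ _ _ (mappingCone.snd _) 0 (by simp) (by simp)
      have h1 : IsZero ((mappingCone (𝟙 K)).homology n) := by
        rw [IsZero.iff_id_eq_zero, ← HomologicalComplex.homologyMap_id, h₀.homologyMap_eq,
          HomologicalComplex.homologyMap_zero]
      have h2 : IsZero (K.homology n) :=
        (HomologicalComplex.exactAt_iff_isZero_homology _ _).1 (hK n)
      exact ⟨0, h2.eq_of_src _ _, h1.eq_of_src _ _⟩
    have := hI _ ⟨hmono, hq⟩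
    have sq : CommSq f (mappingCone.inr (𝟙 K)) (0 : I ⟶ 0) 0 := ⟨by simp⟩
    refine ⟨(Cochain.equivHomotopy f 0).symm
      ⟨(mappingCone.inl (𝟙 K)).comp (Cochain.ofHom sq.lift) (add_zero _), ?_⟩⟩
    have hfac := sq.fac_left
    rw [Cochain.ofHom_zero, add_zero, δ_comp_ofHom, mappingCone.δ_inl, ← Cochain.ofHom_comp,
      Category.id_comp, hfac]

end AcyclicMono

end DerivedProducts

namespace DerivedProducts

section Transfinite

set_option linter.unusedSectionVars false

open MorphismProperty

variable {D : Type u} [Category.{v} D] [Abelian D] (T : MorphismProperty D) {X : D}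

open scoped Classical in
/-- A strictly larger subobject reached by a morphism in `T.llp`, if there is one. -/
noncomputable def larger (A : Subobject X) : Subobject X :=
  if hA : ∃ (A' : Subobject X) (h : A < A'), T.llp (Subobject.ofLE A A' h.le)
    then hA.choose else ⊤

lemma lt_larger (A : Subobject X) (hA : A ≠ ⊤) : A < larger T A := by
  dsimp only [larger]
  split_ifs with h
  · exact h.choose_spec.choose
  · exact lt_top_iff_ne_top.2 hA

lemma larger_top : larger T (⊤ : Subobject X) = ⊤ := by
  dsimp only [larger]
  split_ifs with h
  · exact (not_top_lt h.choose_spec.choose).elim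
  · rfl

lemma le_larger (A : Subobject X) : A ≤ larger T A := by
  by_cases hA : A = ⊤
  · subst hA
    simp only [larger_top, le_refl]
  · exact (lt_larger T A hA).le

lemma llp_of_subobject_eq {A A' B B' : Subobject X} (hA : A = A') (hB : B = B') (h : A ≤ B)
    (h' : A' ≤ B') (H : T.llp (Subobject.ofLE A B h)) : T.llp (Subobject.ofLE A' B' h') := by
  subst hA hB
  exact H

lemma llp_larger (A : Subobject X)
    (hA : A ≠ ⊤ → ∃ (A' : Subobject X) (h : A < A'), T.llp (Subobject.ofLE A A' h.le)) :
    T.llp (Subobject.ofLE A (larger T A) (le_larger T A)) := by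
  by_cases h : A = ⊤
  · subst h
    refine llp_of_subobject_eq T rfl (larger_top T).symm le_rfl _ ?_
    rw [Subobject.ofLE_refl]
    exact MorphismProperty.id_mem _ _
  · refine llp_of_subobject_eq T rfl ?_ _ _ (hA h).choose_spec.choose_spec
    dsimp only [larger]
    rw [dif_pos (hA h)]

variable [IsGrothendieckAbelian.{v} D] (A₀ : Subobject X) (J : Type v)
  [LinearOrder J] [OrderBot J] [SuccOrder J] [WellFoundedLT J]

/-- The transfinite iteration of `larger`, as a functor. -/
@[simps]
noncomputable def iterMonoOver : J ⥤ MonoOver X where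
  obj j := MonoOver.mk (transfiniteIterate (larger T) j A₀).arrow
  map {j j'} f := MonoOver.homMk (Subobject.ofLE _ _
      (monotone_transfiniteIterate _ _ (le_larger T) (leOfHom f)))

/-- The transfinite iteration of `larger`, as a functor. -/
noncomputable abbrev iterFunctor : J ⥤ D :=
  iterMonoOver T A₀ J ⋙ MonoOver.forget _ ⋙ Over.forget _

instance : (iterFunctor T A₀ J).IsWellOrderContinuous where
  nonempty_isColimit m hm := ⟨by
    have := hm.nonempty_Iio.to_subtype
    let c := (Set.principalSegIio m).cocone (iterMonoOver T A₀ J ⋙ MonoOver.forget _)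
    have : Mono c.pt.hom := inferInstanceAs (Mono (transfiniteIterate (larger T) m A₀).arrow)
    apply IsGrothendieckAbelian.isColimitMapCoconeOfSubobjectMkEqISup
      ((Set.principalSegIio m).monotone.functor ⋙ iterMonoOver T A₀ J) c
    change Subobject.mk (transfiniteIterate (larger T) m A₀).arrow =
      ⨆ (i : Set.Iio m), Subobject.mk (transfiniteIterate (larger T) i.1 A₀).arrow
    simp only [Subobject.mk_arrow]
    exact transfiniteIterate_limit (larger T) A₀ m hm⟩

variable {J} in
lemma llp_iter (hA₀ : ∀ (A : Subobject X) (h : A₀ ≤ A), T.llp (Subobject.ofLE _ _ h) → A ≠ ⊤ →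
      ∃ (A' : Subobject X) (h : A < A'), T.llp (Subobject.ofLE A A' h.le)) (m : J) :
    T.llp ((iterFunctor T A₀ J).map (homOfLE bot_le : ⊥ ⟶ m)) := by
  induction m using WellFoundedLT.induction with | _ m IH
  have hc : T.llp.TransfiniteCompositionOfShape (Set.Iic m)
      ((iterFunctor T A₀ J).map (homOfLE bot_le : ⊥ ⟶ m)) :=
    { F := (Set.initialSegIic m).monotone.functor ⋙ iterFunctor T A₀ J
      isoBot := Iso.refl _
      incl :=
        { app k := (iterFunctor T A₀ J).map (homOfLE k.2)
          naturality k k' h := by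
            refine ((iterFunctor T A₀ J).map_comp (homOfLE (leOfHom h) : k.1 ⟶ k'.1) _).symm.trans
              (Eq.trans ?_ (Category.comp_id _).symm)
            congr 1 }
      isColimit := colimitOfDiagramTerminal isTerminalTop _
      fac := Category.id_comp _
      map_mem k hk := by
        have hk' : ¬ IsMax k.1 := Set.not_isMax_coe _ hk
        have hkm : k.1 < m := lt_of_le_of_ne k.2 (fun h => hk (by
          intro b hb
          exact Subtype.coe_le_coe.1 (b.2.trans h.ge)))
        have hIH := IH k.1 hkm
        refine llp_of_subobject_eq T (A := transfiniteIterate (larger T) k.1 A₀)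
          (A' := transfiniteIterate (larger T) k.1 A₀)
          (B' := transfiniteIterate (larger T) (Order.succ k).1 A₀) rfl ?_
          (le_larger T _) _ (llp_larger T _ ?_)
        · rw [Set.Iic.succ_eq_of_not_isMax hk, transfiniteIterate_succ _ _ _ hk']
        · have hle : A₀ ≤ transfiniteIterate (larger T) k.1 A₀ := by
            have : transfiniteIterate (larger T) ⊥ A₀ ≤ transfiniteIterate (larger T) k.1 A₀ :=
              monotone_transfiniteIterate (larger T) A₀ (le_larger T) (bot_le : ⊥ ≤ k.1)
            rwa [transfiniteIterate_bot] at this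
          refine hA₀ _ hle ?_
          exact llp_of_subobject_eq T (transfiniteIterate_bot _ _) rfl _ _ hIH }
  exact transfiniteCompositionsOfShape_le _ _ _ hc.mem

lemma llp_arrow (hA₀ : ∀ (A : Subobject X) (h : A₀ ≤ A), T.llp (Subobject.ofLE _ _ h) → A ≠ ⊤ →
      ∃ (A' : Subobject X) (h : A < A'), T.llp (Subobject.ofLE A A' h.le)) :
    T.llp A₀.arrow := by
  let κ := Order.succ (Cardinal.mk (Shrink.{v} (Subobject X)))
  have : Nonempty κ.ord.ToType := by simp [κ]
  have := WellFoundedLT.toOrderBot κ.ord.ToType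
  have hJ : HasCardinalLT (Subobject X) (Cardinal.mk κ.ord.ToType) :=
    lt_of_lt_of_le (Order.lt_succ _) (by simp [κ])
  obtain ⟨j, hj⟩ : ∃ (j : κ.ord.ToType), transfiniteIterate (larger T) j A₀ = ⊤ :=
    top_mem_range_transfiniteIterate (larger T) A₀ (lt_larger T) (larger_top T)
      (fun h ↦ by simpa [hasCardinalLT_iff_cardinal_mk_lt] using hJ.of_injective _ h)
  have h1 := llp_iter T A₀ hA₀ j
  have h2 : T.llp (Subobject.ofLE A₀ ⊤ le_top) :=
    llp_of_subobject_eq T (transfiniteIterate_bot _ _) hj _ _ h1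
  have h3 : Subobject.ofLE A₀ ⊤ le_top ≫ (⊤ : Subobject X).arrow = A₀.arrow := by simp
  rw [← h3]
  exact MorphismProperty.comp_mem _ _ _ h2 (of_isIso _ _)

end Transfinite

end DerivedProducts

namespace DerivedProducts

section SmallObject

open MorphismProperty CochainComplex
open scoped ZeroObject

set_option linter.unusedSectionVars false

variable {C : Type u} [Category.{v} C] [Abelian C]

/-- The inclusions of the subcomplexes of `H` which are quasi-isomorphisms. -/
def gen (H : CochainComplex C ℤ) : MorphismProperty (CochainComplex C ℤ) :=
  ofHoms (fun (R : { R : Subobject H // QuasiIso R.arrow }) ↦ R.1.arrow)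

lemma gen_le_acyclicMono (H : CochainComplex C ℤ) : gen H ≤ acyclicMono C := by
  rintro _ _ _ ⟨R⟩
  exact ⟨inferInstance, R.2⟩

variable [IsGrothendieckAbelian.{v} C]

lemma gen_le_monomorphisms (H : CochainComplex C ℤ) :
    gen H ≤ monomorphisms _ := fun _ _ _ h => (gen_le_acyclicMono H _ h).1

instance (H : CochainComplex C ℤ) : HasSmallObjectArgument.{v} (gen H) := by
  obtain ⟨κ, hκ', hκ⟩ := HasCardinalLT.exists_regular_cardinal.{v} (Subobject H)
  have : Fact κ.IsRegular := ⟨hκ'⟩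
  have : Nonempty κ.ord.ToType := by simpa using hκ'.ne_zero
  have := WellFoundedLT.toOrderBot κ.ord.ToType
  have : MorphismProperty.IsSmall.{v} (gen H) := by
    dsimp [gen]
    infer_instance
  exact ⟨κ, inferInstance, inferInstance,
    { preservesColimit {A B X Y} i hi f hf := by
        let hf' : (monomorphisms _).TransfiniteCompositionOfShape κ.ord.ToType f :=
          { toTransfiniteCompositionOfShape := hf.toTransfiniteCompositionOfShape
            map_mem j hj := by
              have := (hf.attachCells j hj).pushouts_coproducts
              simp only [ofHoms_homFamily] at this
              refine (?_ : _ ≤ monomorphisms _) _ this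
              simp only [pushouts_le_iff, coproducts_le_iff]
              exact gen_le_monomorphisms H }
        have (j j' : κ.ord.ToType) (φ : j ⟶ j') : Mono (hf'.F.map φ) := hf'.mem_map φ
        apply IsGrothendieckAbelian.preservesColimit_coyoneda_obj_of_mono (Y := hf'.F) (κ := κ)
        obtain ⟨S⟩ := hi
        exact Subobject.hasCardinalLT_of_mono hκ S.1.arrow }⟩

lemma gen_rlp_llp_le (H : CochainComplex C ℤ) : (gen H).rlp.llp ≤ acyclicMono C := by
  intro X Y i hi
  have : Mono i := by
    have h1 : (gen H).rlp.llp ≤ monomorphisms (CochainComplex C ℤ) := by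
      rw [← IsGrothendieckAbelian.llp_rlp_monomorphisms.{v}
        (isSeparator_separator (CochainComplex C ℤ))]
      exact antitone_llp (antitone_rlp (gen_le_monomorphisms H))
    exact h1 _ hi
  refine ⟨this, quasiIso_of_llp i ?_⟩
  refine antitone_llp ?_ _ hi
  rw [← le_llp_iff_le_rlp]
  exact (gen_le_acyclicMono H).trans acyclicMono_le_llp

lemma exists_pushouts (H : CochainComplex C ℤ)
    (hH : ∀ ⦃A B : CochainComplex C ℤ⦄ (p : A ⟶ B) [Mono p], QuasiIso p → ¬ IsIso p →
      ∃ (f : H ⟶ B), (¬ ∃ g, g ≫ p = f) ∧ QuasiIso (pullback.snd p f))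
        {X Y : CochainComplex C ℤ} (p : X ⟶ Y) [Mono p] (hq : QuasiIso p) (hp : ¬ IsIso p) :
    ∃ (X' : CochainComplex C ℤ) (i : X ⟶ X') (p' : X' ⟶ Y) (_ : (gen H).rlp.llp i)
      (_ : ¬ IsIso i) (_ : Mono p'), i ≫ p' = p := by
  obtain ⟨f, hf, hf'⟩ := hH p hq hp
  have hR : QuasiIso (Subobject.mk (pullback.snd p f)).arrow := by
    rw [← Subobject.underlyingIso_hom_comp_eq_mk]
    infer_instance
  have h1 : gen H (Subobject.mk (pullback.snd p f)).arrow :=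
    ⟨(⟨Subobject.mk (pullback.snd p f), hR⟩ : { R : Subobject H // QuasiIso R.arrow })⟩
  have h2 : (gen H).rlp.llp (pullback.snd p f) := by
    have h3 := Subobject.underlyingIso_arrow (pullback.snd p f)
    rw [← h3]
    exact MorphismProperty.comp_mem _ _ _ (of_isIso _ _) (le_llp_rlp _ _ h1)
  refine ⟨pushout (pullback.fst p f) (pullback.snd p f), pushout.inl _ _,
    pushout.desc p f pullback.condition,
    MorphismProperty.of_isPushout (IsPushout.of_hasPushout _ _) h2, ?_, ?_, pushout.inl_desc _ _ _⟩
  · intro h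
    refine hf ⟨pushout.inr _ _ ≫ inv (pushout.inl (pullback.fst p f) (pullback.snd p f)), ?_⟩
    have : p = pushout.inl (pullback.fst p f) (pullback.snd p f) ≫
      pushout.desc p f pullback.condition := (pushout.inl_desc _ _ _).symm
    conv_lhs =>
      arg 2
      rw [this]
    rw [Category.assoc, IsIso.inv_hom_id_assoc]
    exact pushout.inr_desc _ _ _
  · exact (IsPushout.of_hasPushout _ _).mono_of_isPullback_of_mono
      (IsPullback.of_hasPullback p f) _ (pushout.inl_desc _ _ _) (pushout.inr_desc _ _ _)

lemma exists_larger (H : CochainComplex C ℤ)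
    (hH : ∀ ⦃A B : CochainComplex C ℤ⦄ (p : A ⟶ B) [Mono p], QuasiIso p → ¬ IsIso p →
      ∃ (f : H ⟶ B), (¬ ∃ g, g ≫ p = f) ∧ QuasiIso (pullback.snd p f))
    {X : CochainComplex C ℤ} (A : Subobject X) (hq : QuasiIso A.arrow)
    (hA : A ≠ ⊤) :
    ∃ (A' : Subobject X) (h : A < A'), (gen H).rlp.llp (Subobject.ofLE A A' h.le) := by
  obtain ⟨X', i, p', hi, hi', hp', fac⟩ := exists_pushouts H hH A.arrow hq
    (by rwa [Subobject.isIso_arrow_iff_eq_top])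
  have hlt : A < Subobject.mk p' := by
    rw [← Subobject.mk_arrow A]
    exact Subobject.mk_lt_mk_of_comm i fac hi'
  refine ⟨Subobject.mk p', hlt, ?_⟩
  have : Subobject.ofLE A (Subobject.mk p') hlt.le = i ≫ (Subobject.underlyingIso p').inv := by
    rw [← cancel_mono (Subobject.mk p').arrow]
    simp [fac]
  rw [this]
  exact MorphismProperty.comp_mem _ _ _ hi (of_isIso _ _)

lemma acyclicMono_le_gen (H : CochainComplex C ℤ)
    (hH : ∀ ⦃A B : CochainComplex C ℤ⦄ (p : A ⟶ B) [Mono p], QuasiIso p → ¬ IsIso p →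
      ∃ (f : H ⟶ B), (¬ ∃ g, g ≫ p = f) ∧ QuasiIso (pullback.snd p f))
    : acyclicMono C ≤ (gen H).rlp.llp := by
  rintro X Y p ⟨hp, hq⟩
  have hR : QuasiIso (Subobject.mk p).arrow := by
    rw [← Subobject.underlyingIso_hom_comp_eq_mk]
    infer_instance
  have := llp_arrow (gen H).rlp (Subobject.mk p) (fun A hA h1 h2 => by
    have h3 := (gen_rlp_llp_le H _ h1).2
    have h4 : Subobject.ofLE _ _ hA ≫ A.arrow = (Subobject.mk p).arrow := by simp
    rw [← h4] at hR
    exact exists_larger H hH A (quasiIso_of_comp_left (Subobject.ofLE _ _ hA) A.arrow) h2)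
  have h3 := Subobject.underlyingIso_arrow p
  rw [← h3]
  exact MorphismProperty.comp_mem _ _ _ (of_isIso _ _) this

lemma exists_kInjective (H : CochainComplex C ℤ)
    (hH : ∀ ⦃A B : CochainComplex C ℤ⦄ (p : A ⟶ B) [Mono p], QuasiIso p → ¬ IsIso p →
      ∃ (f : H ⟶ B), (¬ ∃ g, g ≫ p = f) ∧ QuasiIso (pullback.snd p f))
    (X : CochainComplex C ℤ) :
    ∃ (I : CochainComplex C ℤ) (i : X ⟶ I), QuasiIso i ∧ I.IsKInjective := by
  let fac := (functorialFactorizationData (gen H).rlp.llp (gen H).rlp).factorizationData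
    (0 : X ⟶ 0)
  refine ⟨fac.Z, fac.i, (gen_rlp_llp_le H _ fac.hi).2, isKInjective_of_rlp _ ?_⟩
  have h := fac.hp
  rw [(isZero_zero _).eq_of_tgt fac.p 0] at h
  have h' : (gen H).rlp.llp.rlp (0 : fac.Z ⟶ 0) := (rlp_llp_rlp (gen H)).ge _ h
  exact antitone_rlp (acyclicMono_le_gen H hH) _ h'

end SmallObject

end DerivedProducts

namespace DerivedProducts

section Key

set_option linter.unusedSectionVars false

variable {C : Type u} [Category.{v} C] [Abelian C] [IsGrothendieckAbelian.{v} C]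

lemma joint_epi {J : Type v} [SmallCategory J] [IsFiltered J] {Y : J ⥤ C} {c : Cocone Y}
    (hc : IsColimit c) {X W : C} (z : X ⟶ c.pt) (u : X ⟶ W)
    (h : ∀ (j : J) (T : C) (a : T ⟶ Y.obj j) (b : T ⟶ X), a ≫ c.ι.app j = b ≫ z → b ≫ u = 0) :
    u = 0 := by
  have := IsGrothendieckAbelian.IsPresentable.surjectivity.epi_f hc z
  rw [← cancel_epi (IsGrothendieckAbelian.IsPresentable.surjectivity.f z), comp_zero]
  refine colimit.hom_ext (fun j => ?_)
  rw [comp_zero, ← Category.assoc, IsGrothendieckAbelian.IsPresentable.surjectivity.hf]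
  refine h j _ ((pullback.fst c.ι ((Functor.const J).map z)).app j) _ ?_
  exact NatTrans.congr_app (pullback.condition (f := c.ι) (g := (Functor.const J).map z)) j

lemma acyclic_image {J : Type v} [SmallCategory J] [IsFiltered J] {F : J ⥤ CochainComplex C ℤ}
    {c : Cocone F} (hc : IsColimit c) {N K : CochainComplex C ℤ} (e : c.pt ⟶ N) (m : N ⟶ K)
    [Epi e] [Mono m]
    (h : ∀ (j : J) (n : ℤ) (T : C) (a : T ⟶ (F.obj j).X (n + 1)),
      a ≫ (c.ι.app j ≫ e ≫ m).f (n + 1) ≫ K.d (n + 1) (n + 1 + 1) = 0 →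
      ∀ (W : C) (u : T ⟶ W), (∀ (G : C) (ε : G ⟶ T) (s : G ⟶ c.pt.X n),
        ε ≫ a ≫ (c.ι.app j ≫ e ≫ m).f (n + 1) = s ≫ (e ≫ m).f n ≫ K.d n (n + 1) → ε ≫ u = 0) →
      u = 0) :
    N.Acyclic := by
  intro i
  obtain ⟨n, rfl⟩ : ∃ n, i = n + 1 := ⟨i - 1, by simp⟩
  rw [HomologicalComplex.exactAt_iff' N n (n + 1) (n + 1 + 1) (by simp) (by simp)]
  rw [ShortComplex.exact_iff_epi_toCycles]
  let S := N.sc' n (n + 1) (n + 1 + 1)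
  change Epi S.toCycles
  rw [Preadditive.epi_iff_cancel_zero]
  intro W u hu
  let Z : C := S.cycles
  let iZ : Z ⟶ N.X (n + 1) := S.iCycles
  let tZ : N.X n ⟶ Z := S.toCycles
  change Z ⟶ W at u
  change tZ ≫ u = 0 at hu
  have hiZ : iZ ≫ N.d (n + 1) (n + 1 + 1) = 0 := S.iCycles_g
  have htZ : tZ ≫ iZ = N.d n (n + 1) := S.toCycles_i
  have hmZ : Mono iZ := inferInstanceAs (Mono S.iCycles)
  have key : ∀ (j : J) (T : C) (a : T ⟶ (F.obj j).X (n + 1))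
      (b : T ⟶ pullback iZ (e.f (n + 1))),
      a ≫ (c.ι.app j).f (n + 1) = b ≫ pullback.snd iZ (e.f (n + 1)) →
      b ≫ pullback.fst iZ (e.f (n + 1)) ≫ u = 0 := by
    intro j T a b hab
    have h1 : a ≫ (c.ι.app j ≫ e ≫ m).f (n + 1) =
        b ≫ pullback.fst iZ (e.f (n + 1)) ≫ iZ ≫ m.f (n + 1) := by
      have h0 : (c.ι.app j ≫ e ≫ m).f (n + 1) =
        (c.ι.app j).f (n + 1) ≫ e.f (n + 1) ≫ m.f (n + 1) := rfl
      rw [h0, ← Category.assoc, hab, Category.assoc, pullback.condition_assoc]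
    refine h j n T a ?_ W _ (fun G ε s hs => ?_)
    · rw [← Category.assoc, h1]
      simp only [Category.assoc]
      rw [m.comm, reassoc_of% hiZ]
      simp
    · rw [h1] at hs
      have h2 : (ε ≫ b ≫ pullback.fst iZ (e.f (n + 1))) = s ≫ e.f n ≫ tZ := by
        rw [← cancel_mono iZ, ← cancel_mono (m.f (n + 1))]
        simp only [Category.assoc, htZ]
        rw [hs, HomologicalComplex.comp_f, Category.assoc, m.comm]
      rw [← Category.assoc b, ← Category.assoc ε, h2, Category.assoc, Category.assoc, hu,
        comp_zero, comp_zero]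
  rw [← cancel_epi (pullback.fst iZ (e.f (n + 1))), comp_zero]
  exact joint_epi (isColimitOfPreserves (HomologicalComplex.eval C (ComplexShape.up ℤ) (n + 1)) hc)
    (pullback.snd iZ (e.f (n + 1))) _ (fun j T a b hab => key j T a b hab)

/-- The disk complex. -/
noncomputable abbrev disk (G : C) (n : ℤ) : CochainComplex C ℤ :=
  HomologicalComplex.evalCompCoyonedaCorepresentative (ComplexShape.up ℤ) G n

/-- The universal element of the disk complex. -/
noncomputable def diskι (G : C) (n : ℤ) : G ⟶ (disk G n).X n :=
  (HomologicalComplex.evalCompCoyonedaCorepresentable (ComplexShape.up ℤ) G n).homEquiv (𝟙 _)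

lemma exists_disk (G : C) (n : ℤ) {X : CochainComplex C ℤ} (g : G ⟶ X.X n) :
    ∃ (φ : disk G n ⟶ X), diskι G n ≫ φ.f n = g := by
  let R := HomologicalComplex.evalCompCoyonedaCorepresentable (ComplexShape.up ℤ) G n
  obtain ⟨φ, hφ⟩ := R.homEquiv.surjective g
  refine ⟨φ, ?_⟩
  rw [← hφ, R.homEquiv_eq φ]
  rfl

/-- Adding disks to a complex. -/
noncomputable def Phi (G : C) (H : CochainComplex C ℤ) : CochainComplex C ℤ :=
  H ⨿ ∐ (fun (x : Σ (n : ℤ), G ⟶ H.X (n + 1)) => disk G x.1)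

/-- The inclusion. -/
noncomputable def Phiι (G : C) (H : CochainComplex C ℤ) : H ⟶ Phi G H := coprod.inl

lemma exists_step (G : C) {H B K : CochainComplex C ℤ} (π : B ⟶ K) (f : H ⟶ B) :
    ∃ (f' : Phi G H ⟶ B), Phiι G H ≫ f' = f ∧
      ∀ (n : ℤ) (e : G ⟶ H.X (n + 1)) (g : G ⟶ B.X n),
        g ≫ π.f n ≫ K.d n (n + 1) = e ≫ (f ≫ π).f (n + 1) →
        ∃ (s : G ⟶ (Phi G H).X n),
          e ≫ (f ≫ π).f (n + 1) = s ≫ (f' ≫ π).f n ≫ K.d n (n + 1) := by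
  have hx (x : Σ (n : ℤ), G ⟶ H.X (n + 1)) : ∃ (φ : disk G x.1 ⟶ B),
      ∀ (g : G ⟶ B.X x.1), g ≫ π.f x.1 ≫ K.d x.1 (x.1 + 1) = x.2 ≫ (f ≫ π).f (x.1 + 1) →
        x.2 ≫ (f ≫ π).f (x.1 + 1) = (diskι G x.1 ≫ φ.f x.1) ≫ π.f x.1 ≫ K.d x.1 (x.1 + 1) := by
    by_cases h : ∃ (g : G ⟶ B.X x.1),
      g ≫ π.f x.1 ≫ K.d x.1 (x.1 + 1) = x.2 ≫ (f ≫ π).f (x.1 + 1)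
    · obtain ⟨g, hg⟩ := h
      obtain ⟨φ, hφ⟩ := exists_disk G x.1 g
      exact ⟨φ, fun _ _ => by rw [hφ, hg]⟩
    · exact ⟨0, fun g hg => (h ⟨g, hg⟩).elim⟩
  choose φ hφ using hx
  obtain ⟨f', hf', hf''⟩ : ∃ (f' : Phi G H ⟶ B), Phiι G H ≫ f' = f ∧
      ∀ (x : Σ (n : ℤ), G ⟶ H.X (n + 1)), ∃ (i : disk G x.1 ⟶ Phi G H), i ≫ f' = φ x := by
    refine ⟨coprod.desc f (Sigma.desc φ), coprod.inl_desc _ _, fun x => ⟨Sigma.ι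
      (fun (x : Σ (n : ℤ), G ⟶ H.X (n + 1)) => disk G x.1) x ≫ coprod.inr, ?_⟩⟩
    refine (Category.assoc _ _ _).trans ?_
    refine Eq.trans (congrArg (fun t => _ ≫ t) (coprod.inr_desc _ _)) ?_
    exact Sigma.ι_desc _ _
  refine ⟨f', hf', fun n e g hg => ?_⟩
  obtain ⟨i, hi⟩ := hf'' ⟨n, e⟩
  refine ⟨diskι G n ≫ i.f n, ?_⟩
  have hi' : i.f n ≫ f'.f n = (φ ⟨n, e⟩).f n := by rw [← HomologicalComplex.comp_f, hi]
  refine (hφ ⟨n, e⟩ g hg).trans ?_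
  dsimp only
  rw [← hi', HomologicalComplex.comp_f]
  simp only [Category.assoc]

/-- The iterated complexes. -/
noncomputable def Hs (G : C) (H₀ : CochainComplex C ℤ) : ℕ → CochainComplex C ℤ
  | 0 => H₀
  | k + 1 => Phi G (Hs G H₀ k)

/-- The diagram of iterated complexes. -/
noncomputable def HsF (G : C) (H₀ : CochainComplex C ℤ) : ULift.{v} ℕ ⥤ CochainComplex C ℤ :=
  (show Monotone (ULift.down : ULift.{v} ℕ → ℕ) from fun _ _ h => h).functor ⋙
    Functor.ofSequence (X := Hs G H₀) (fun k => Phiι G (Hs G H₀ k))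

end Key

end DerivedProducts

namespace DerivedProducts

section Key2

set_option linter.unusedSectionVars false

variable {C : Type u} [Category.{v} C] [Abelian C] [IsGrothendieckAbelian.{v} C]

instance : HasColimitsOfSize.{v, v} C := inferInstance

/-- The colimit of the iterated complexes. -/
noncomputable def Hc (G : C) (H₀ : CochainComplex C ℤ) : CochainComplex C ℤ := colimit (HsF G H₀)

/-- The inclusions in the colimit. -/
noncomputable def incl (G : C) (H₀ : CochainComplex C ℤ) (k : ℕ) : Hs G H₀ k ⟶ Hc G H₀ :=
  colimit.ι (HsF G H₀) ⟨k⟩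

lemma exists_desc (G : C) (H₀ : CochainComplex C ℤ) {B : CochainComplex C ℤ}
    (fs : ∀ k, Hs G H₀ k ⟶ B) (hfs : ∀ k, Phiι G (Hs G H₀ k) ≫ fs (k + 1) = fs k) :
    ∃ (f : Hc G H₀ ⟶ B), ∀ k, incl G H₀ k ≫ f = fs k := by
  let α : Functor.ofSequence (X := Hs G H₀) (fun k => Phiι G (Hs G H₀ k)) ⟶
      (Functor.const _).obj B := NatTrans.ofSequence fs (fun k => by
        have h := Functor.ofSequence_map_homOfLE_succ (X := Hs G H₀)
          (fun k => Phiι G (Hs G H₀ k)) k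
        exact ((congrArg (fun t => t ≫ fs (k + 1)) h).trans (hfs k)).trans
          (Category.comp_id _).symm)
  let c : Cocone (HsF G H₀) :=
    { pt := B
      ι := { app := fun k => fs k.down
             naturality := fun i j φ =>
              α.naturality (homOfLE (show i.down ≤ j.down from (leOfHom φ : i ≤ j))) } }
  exact ⟨colimit.desc _ c, fun k => colimit.ι_desc c ⟨k⟩⟩

lemma exists_map (G : C) (H₀ : CochainComplex C ℤ) {B K : CochainComplex C ℤ}
    (π : B ⟶ K) (f₀ : H₀ ⟶ B) :
    ∃ (f : Hc G H₀ ⟶ B), incl G H₀ 0 ≫ f = f₀ ∧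
      ∀ (k : ℕ) (n : ℤ) (e : G ⟶ (Hs G H₀ k).X (n + 1)) (g : G ⟶ B.X n),
        g ≫ π.f n ≫ K.d n (n + 1) = e ≫ (incl G H₀ k ≫ f ≫ π).f (n + 1) →
        ∃ (s : G ⟶ (Hc G H₀).X n),
          e ≫ (incl G H₀ k ≫ f ≫ π).f (n + 1) = s ≫ (f ≫ π).f n ≫ K.d n (n + 1) := by
  choose st hst hst' using fun (H : CochainComplex C ℤ) (f : H ⟶ B) => exists_step G π f
  let fs : ∀ k, Hs G H₀ k ⟶ B := fun k => Nat.rec (motive := fun k => Hs G H₀ k ⟶ B) f₀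
    (fun k fk => st (Hs G H₀ k) fk) k
  have hfs (k) : fs (k + 1) = st (Hs G H₀ k) (fs k) := rfl
  obtain ⟨f, hf⟩ := exists_desc G H₀ fs (fun k => by rw [hfs]; exact hst _ _)
  refine ⟨f, hf 0, fun k n e g hg => ?_⟩
  have h1 : incl G H₀ k ≫ f ≫ π = fs k ≫ π := by rw [← Category.assoc, hf]
  rw [h1] at hg ⊢
  obtain ⟨s, hs⟩ := hst' _ (fs k) n e g hg
  refine ⟨s ≫ (incl G H₀ (k + 1)).f n, ?_⟩
  have h2 : (incl G H₀ (k + 1)).f n ≫ (f ≫ π).f n = (fs (k + 1) ≫ π).f n := by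
    rw [← hf (k + 1), ← HomologicalComplex.comp_f, Category.assoc]
  change G ⟶ (Hs G H₀ (k + 1)).X n at s
  have hs' : e ≫ (fs k ≫ π).f (n + 1) = s ≫ (fs (k + 1) ≫ π).f n ≫ K.d n (n + 1) := hs
  rw [hs', ← h2]
  simp only [Category.assoc]
  exact (Category.assoc _ _ _).symm

lemma lift_cycles {K : CochainComplex C ℤ} (hK : K.Acyclic) (n : ℤ) {T B : C}
    (x : T ⟶ K.X (n + 1)) (hx : x ≫ K.d (n + 1) (n + 1 + 1) = 0) (b : B ⟶ K.X n) [Epi b] :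
    ∃ (P : C) (t : P ⟶ T) (g : P ⟶ B), Epi t ∧ t ≫ x = g ≫ b ≫ K.d n (n + 1) := by
  have h := hK (n + 1)
  rw [HomologicalComplex.exactAt_iff' K n (n + 1) (n + 1 + 1) (by simp) (by simp)] at h
  obtain ⟨A, t, ht, y, hy⟩ := h.exact_up_to_refinements x hx
  change A ⟶ K.X n at y
  change t ≫ x = y ≫ K.d n (n + 1) at hy
  refine ⟨pullback y b, pullback.fst y b ≫ t, pullback.snd y b, epi_comp _ _, ?_⟩
  rw [Category.assoc, hy, pullback.condition_assoc]

lemma acyclic_image' (G : C) (hG : IsSeparator G) (H₀ : CochainComplex C ℤ)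
    {B K N : CochainComplex C ℤ} (hK : K.Acyclic) (π : B ⟶ K) [Epi π] (f : Hc G H₀ ⟶ B)
    (hf : ∀ (k : ℕ) (n : ℤ) (e : G ⟶ (Hs G H₀ k).X (n + 1)) (g : G ⟶ B.X n),
        g ≫ π.f n ≫ K.d n (n + 1) = e ≫ (incl G H₀ k ≫ f ≫ π).f (n + 1) →
        ∃ (s : G ⟶ (Hc G H₀).X n),
          e ≫ (incl G H₀ k ≫ f ≫ π).f (n + 1) = s ≫ (f ≫ π).f n ≫ K.d n (n + 1))
    (e : Hc G H₀ ⟶ N) (m : N ⟶ K) [Epi e] [Mono m] (hem : e ≫ m = f ≫ π) : N.Acyclic := by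
  have he : Epi (show (colimit.cocone (HsF G H₀)).pt ⟶ N from e) := inferInstanceAs (Epi e)
  have key : ∀ (k : ℕ) (n : ℤ) (T : C) (a : T ⟶ (Hs G H₀ k).X (n + 1)),
      a ≫ (incl G H₀ k ≫ e ≫ m).f (n + 1) ≫ K.d (n + 1) (n + 1 + 1) = 0 →
      ∀ (W : C) (u : T ⟶ W), (∀ (G' : C) (ε : G' ⟶ T) (s : G' ⟶ (Hc G H₀).X n),
        ε ≫ a ≫ (incl G H₀ k ≫ e ≫ m).f (n + 1) = s ≫ (e ≫ m).f n ≫ K.d n (n + 1) →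
          ε ≫ u = 0) → u = 0 := by
    rw [hem]
    intro k n T a ha W u hu
    obtain ⟨P, t, g, ht, htg⟩ := lift_cycles hK n (a ≫ (incl G H₀ k ≫ f ≫ π).f (n + 1))
      (by rw [Category.assoc, ha]) (π.f n)
    rw [← cancel_epi t, comp_zero]
    refine hG.def _ _ (fun y => ?_)
    rw [comp_zero, ← Category.assoc]
    obtain ⟨s, hs⟩ := hf k n (y ≫ t ≫ a) (y ≫ g) (by simp only [Category.assoc, htg])
    refine hu G (y ≫ t) s ?_
    rw [← hs]
    simp only [Category.assoc]
  exact acyclic_image (colimit.isColimit (HsF G H₀)) e m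
    (fun j n T a ha W u hu => key j.down n T a ha W u hu)

lemma quasiIso_snd {A B H : CochainComplex C ℤ} (p : A ⟶ B) [Mono p] (f : H ⟶ B)
    (hN : (image (f ≫ cokernel.π p)).Acyclic) : QuasiIso (pullback.snd p f) := by
  let q := f ≫ cokernel.π p
  have w : pullback.snd p f ≫ factorThruImage q = 0 := by
    rw [← cancel_mono (image.ι q), Category.assoc, image.fac, zero_comp]
    change _ ≫ f ≫ cokernel.π p = 0
    rw [← pullback.condition_assoc, cokernel.condition, comp_zero]
  let S := ShortComplex.mk _ _ w
  have hS : S.ShortExact :=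
    { exact := by
        refine ShortComplex.exact_of_f_is_kernel _ ?_
        refine KernelFork.IsLimit.ofι' _ _ (fun {T} k hk => ?_)
        have hk' : (k ≫ f) ≫ cokernel.π p = 0 := by
          rw [Category.assoc]
          change k ≫ q = 0
          rw [← image.fac q, ← Category.assoc]
          exact (congrArg (fun t => t ≫ image.ι q) hk).trans zero_comp
        have hl := (Abelian.monoIsKernelOfCokernel _ (cokernelIsCokernel p)).fac
          (KernelFork.ofι _ hk') WalkingParallelPair.zero
        exact ⟨pullback.lift _ _ hl, pullback.lift_snd _ _ _⟩
      mono_f := inferInstanceAs (Mono (pullback.snd p f))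
      epi_g := inferInstanceAs (Epi (factorThruImage q)) }
  exact quasiIso_of_acyclic hS hN

lemma exists_H : ∃ (H : CochainComplex C ℤ),
    ∀ ⦃A B : CochainComplex C ℤ⦄ (p : A ⟶ B) [Mono p], QuasiIso p → ¬ IsIso p →
      ∃ (f : H ⟶ B), (¬ ∃ g, g ≫ p = f) ∧ QuasiIso (pullback.snd p f) := by
  let G := separator C
  let H₀ := separator (CochainComplex C ℤ)
  refine ⟨Hc G H₀, fun A B p _ hp hp' => ?_⟩
  have hK : (cokernel p).Acyclic := by
    have hS : (ShortComplex.mk _ _ (cokernel.condition p)).ShortExact :=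
      { exact := ShortComplex.exact_cokernel p }
    exact hS.acyclic_X₃ hp
  obtain ⟨f₀, hf₀⟩ : ∃ (f₀ : H₀ ⟶ B), ∀ g, g ≫ p ≠ f₀ := by
    rw [(isSeparator_separator (CochainComplex C ℤ)).isDetector.isIso_iff_of_mono] at hp'
    simp only [ObjectProperty.singleton_iff, Function.Surjective, Functor.flip_obj_map,
      forall_eq', not_forall, not_exists] at hp'
    obtain ⟨f₀, hf₀⟩ := hp'
    exact ⟨f₀, fun g hg => hf₀ g hg⟩
  obtain ⟨f, hf, hf'⟩ := exists_map G H₀ (cokernel.π p) f₀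
  refine ⟨f, ?_, ?_⟩
  · rintro ⟨g, hg⟩
    refine hf₀ (incl G H₀ 0 ≫ g) ?_
    rw [← hf, ← hg]
    exact Category.assoc _ _ _
  · exact quasiIso_snd p f (acyclic_image' G (isSeparator_separator C) H₀ hK _ f hf'
      (factorThruImage _) (image.ι _) (image.fac _))

end Key2

end DerivedProducts

/-- The unbounded derived category of a Grothendieck abelian category (an abelian
category with small colimits, exact filtered colimits and a separator) admits
arbitrary small products. -/
theorem DerivedCategory.hasProducts_of_grothendieckAbelian
    (C : Type u) [Category.{v} C] [Abelian C] [HasColimits C]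
    [AB5 C] [HasSeparator C] [HasDerivedCategory.{w} C] :
    HasProducts.{v} (DerivedCategory C) := by
  have : HasFilteredColimitsOfSize.{v, v} C := ⟨fun _ _ _ => inferInstance⟩
  have : AB5OfSize.{v, v} C := inferInstance
  have : IsGrothendieckAbelian.{v} C := { }
  have : HasLimitsOfSize.{v, v} C := inferInstance
  obtain ⟨H, hH⟩ := DerivedProducts.exists_H (C := C)
  exact DerivedProducts.hasProducts_of_enough (DerivedProducts.exists_kInjective H hH)
end

section
/- Let A be a commutative ring and let X and L be A-modules. Suppose there is a natural isomorphism of functors on the category of A-modules between M ↦ X ⊗_A M and M ↦ Hom_A(L, M). Then L is a finitely generated projective A-module and X is isomorphic to the dual module Hom_A(L, A). -/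
open TensorProduct

universe u

/-- If `X ⊗_A -` and `Hom_A(L, -)` are naturally isomorphic functors on `A`-modules,
then `L` is a finitely generated projective `A`-module and `X ≅ Hom_A(L, A)`. -/
theorem finite_projective_of_tensor_iso_hom
    {A : Type u} [CommRing A] {X L : Type u}
    [AddCommGroup X] [Module A X] [AddCommGroup L] [Module A L]
    (e : ∀ (M : Type u) [AddCommGroup M] [Module A M], (X ⊗[A] M) ≃ₗ[A] (L →ₗ[A] M))
    (nat : ∀ (M : Type u) [AddCommGroup M] [Module A M]
      (N : Type u) [AddCommGroup N] [Module A N] (f : M →ₗ[A] N) (t : X ⊗[A] M),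
      e N (LinearMap.lTensor X f t) = f ∘ₗ (e M t)) :
    Module.Finite A L ∧ Module.Projective A L ∧ Nonempty (X ≃ₗ[A] (L →ₗ[A] A)) := by
  have key : ∀ t : X ⊗[A] L, e L t ∈ LinearMap.range (dualTensorHom A L L) := by
    intro t
    induction t using TensorProduct.induction_on with
    | zero => rw [map_zero]; exact Submodule.zero_mem _
    | add a b ha hb => rw [map_add]; exact Submodule.add_mem _ ha hb
    | tmul x m =>
      refine ⟨(e A (x ⊗ₜ[A] (1 : A))) ⊗ₜ[A] m, ?_⟩
      have h := nat A L (LinearMap.toSpanSingleton A L m) (x ⊗ₜ[A] (1 : A))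
      rw [LinearMap.lTensor_tmul, LinearMap.toSpanSingleton_apply, one_smul] at h
      rw [h]
      ext l
      simp [dualTensorHom_apply]
  have h1 : (1 : L →ₗ[A] L) ∈ LinearMap.range (dualTensorHom A L L) := by
    have := key ((e L).symm 1)
    rwa [LinearEquiv.apply_symm_apply] at this
  exact ⟨Module.Finite.of_one_mem_range_dualTensorHom h1,
    Module.Projective.of_one_mem_range_dualTensorHom h1,
    ⟨(TensorProduct.rid A X).symm.trans (e A)⟩⟩
end

section
/- Let C be an abelian category with arbitrary small coproducts in which coproducts are exact (C satisfies AB4). Then the localization functor from the homotopy category of unbounded cochain complexes K(C) to the unbounded derived category D(C) preserves arbitrary small coproducts. -/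
open CategoryTheory Limits

universe w v u

namespace Aux
section
variable {C : Type*} [Category C] [Abelian C] {ι : Type*} (c : ComplexShape ι)
  {J : Type*} [Category J] 

/-- The complex of functors attached to a functor to complexes. -/
def toComplex (F : J ⥤ HomologicalComplex C c) : HomologicalComplex (J ⥤ C) c where
  X i := F ⋙ HomologicalComplex.eval C c i
  d i j := { app := fun k => (F.obj k).d i j
             naturality := fun _ _ f => (F.map f).comm i j }
  shape i j h := by ext k; exact (F.obj k).shape i j h
  d_comp_d' i j k _ _ := by ext t; exact (F.obj t).d_comp_d i j k

/-- Functoriality of `toComplex`. -/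
def toComplexMap {F G : J ⥤ HomologicalComplex C c} (f : F ⟶ G) :
    toComplex c F ⟶ toComplex c G where
  f i := Functor.whiskerRight f (HomologicalComplex.eval C c i)
  comm' i j _ := by ext k; exact (f.app k).comm i j

variable [HasColimitsOfShape J C]

/-- A cocone computed degreewise. -/
noncomputable def cocone (F : J ⥤ HomologicalComplex C c) : Cocone F where
  pt := ((colim (J := J) (C := C)).mapHomologicalComplex c).obj (toComplex c F)
  ι :=
    { app := fun k => { f := fun i => colimit.ι (F ⋙ HomologicalComplex.eval C c i) k
                        comm' := fun i j _ => ι_colimMap ((toComplex c F).d i j) k }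
      naturality := fun k l f => by
        ext i
        exact (colimit.w (F ⋙ HomologicalComplex.eval C c i) f).trans (Category.comp_id _).symm }

/-- The cocone is colimit. -/
noncomputable def isColimitCocone (F : J ⥤ HomologicalComplex C c) : IsColimit (cocone c F) :=
  HomologicalComplex.isColimitOfEval _ _ (fun _ => colimit.isColimit _)

variable [HasExactColimitsOfShape J C]

lemma quasiIso_colim {F G : J ⥤ HomologicalComplex C c} (f : F ⟶ G)
    (hf : ∀ j, QuasiIso (f.app j)) (a : Cocone F) (b : Cocone G) (ha : IsColimit a)
    (hb : IsColimit b) (φ : a.pt ⟶ b.pt) (hφ : ∀ j, a.ι.app j ≫ φ = f.app j ≫ b.ι.app j) :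
    QuasiIso φ := by
  have h1 : QuasiIso (toComplexMap c f) := by
    rw [HomologicalComplex.quasiIso_iff_evaluation]
    exact fun j => hf j
  let ψ : (cocone c F).pt ⟶ (cocone c G).pt :=
    ((colim (J := J) (C := C)).mapHomologicalComplex c).map (toComplexMap c f)
  have h2 : QuasiIso ψ :=
    HomologicalComplex.quasiIso_map_of_preservesHomology (toComplexMap c f) colim
  have hψ : ∀ j, (cocone c F).ι.app j ≫ ψ = f.app j ≫ (cocone c G).ι.app j := fun j => by
    ext i
    exact ι_colimMap (Functor.whiskerRight f (HomologicalComplex.eval C c i)) j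
  refine quasiIso_of_arrow_mk_iso ψ φ (Arrow.isoMk
    ((isColimitCocone c F).coconePointUniqueUpToIso ha)
    ((isColimitCocone c G).coconePointUniqueUpToIso hb) ?_)
  refine (isColimitCocone c F).hom_ext fun j => ?_
  dsimp only [Arrow.mk_hom]
  erw [IsColimit.comp_coconePointUniqueUpToIso_hom_assoc, reassoc_of% (hψ j),
    IsColimit.comp_coconePointUniqueUpToIso_hom, hφ]
end

section
variable {C : Type*} [Category C] [Preadditive C] {ι : Type*} (c : ComplexShape ι)
  {J : Type*} [HasColimitsOfShape (Discrete J) C]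

lemma homotopy_of_cofan {F : Discrete J ⥤ HomologicalComplex C c} (a : Cocone F)
    (ha : IsColimit a) {L : HomologicalComplex C c} (φ : a.pt ⟶ L)
    (h : ∀ j, Nonempty (Homotopy (a.ι.app j ≫ φ) 0)) : Nonempty (Homotopy φ 0) := by
  have H := fun j => (h j).some
  have he : ∀ i, IsColimit ((HomologicalComplex.eval C c i).mapCocone a) := fun i =>
    isColimitOfPreserves _ ha
  let T : ∀ i k, Cocone (F ⋙ HomologicalComplex.eval C c i) := fun i k =>
    { pt := L.X k
      ι := Discrete.natTrans fun j => (H j).hom i k }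
  let hom : ∀ i k, a.pt.X i ⟶ L.X k := fun i k => (he i).desc (T i k)
  have fac : ∀ i k j, (a.ι.app j).f i ≫ hom i k = (H j).hom i k := fun i k j =>
    (he i).fac (T i k) j
  refine ⟨{ hom := hom, zero := fun i k hik => ?_, comm := fun i => ?_ }⟩
  · refine (he i).hom_ext fun j => ?_
    exact (fac i k j).trans (((H j).zero i k hik).trans comp_zero.symm)
  · refine (he i).hom_ext fun j => ?_
    change (a.ι.app j).f i ≫ φ.f i = (a.ι.app j).f i ≫ _
    have := (H j).comm i
    have e : (H j).hom = fun i k => (a.ι.app j).f i ≫ hom i k := by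
      ext i k; exact (fac i k j).symm
    rw [e, dNext_comp_left, prevD_comp_left] at this
    simpa using this

/-- The quotient functor preserves coproducts. -/
lemma quotient_preserves : PreservesColimitsOfShape (Discrete J)
    (HomotopyCategory.quotient C c) where
  preservesColimit {F} := ⟨fun {a} ha => by
    have ex : ∀ s : Cocone (F ⋙ HomotopyCategory.quotient C c),
        ∃ f : (HomotopyCategory.quotient C c).obj a.pt ⟶ s.pt,
          ∀ j, (HomotopyCategory.quotient C c).map (a.ι.app j) ≫ f = s.ι.app j := fun s => by
      obtain ⟨L, hL⟩ := HomotopyCategory.quotient_obj_surjective s.pt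
      obtain ⟨pt, ι⟩ := s
      dsimp only at hL
      subst hL
      choose g hg using fun j => (HomotopyCategory.quotient C c).map_surjective (ι.app j)
      refine ⟨(HomotopyCategory.quotient C c).map
        (ha.desc { pt := L, ι := { app := g, naturality := ?_ } }), fun j => ?_⟩
      · rintro ⟨i⟩ ⟨j⟩ ⟨⟨h⟩⟩
        dsimp only at h
        subst h
        change F.map (𝟙 _) ≫ _ = _ ≫ 𝟙 _
        simp
      · rw [← Functor.map_comp, ha.fac]
        exact hg j
    have inj : ∀ (L : HomotopyCategory C c) (m m' : (HomotopyCategory.quotient C c).obj a.pt ⟶ L),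
        (∀ j, (HomotopyCategory.quotient C c).map (a.ι.app j) ≫ m =
          (HomotopyCategory.quotient C c).map (a.ι.app j) ≫ m') → m = m' := fun L m m' h => by
      obtain ⟨L, rfl⟩ := HomotopyCategory.quotient_obj_surjective L
      obtain ⟨φ, hφ⟩ := (HomotopyCategory.quotient C c).map_surjective (m - m')
      rw [← sub_eq_zero, ← hφ, HomotopyCategory.quotient_map_eq_zero_iff]
      refine homotopy_of_cofan c a ha φ fun j => ?_
      rw [← HomotopyCategory.quotient_map_eq_zero_iff, Functor.map_comp, hφ,
        Preadditive.comp_sub, sub_eq_zero]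
      exact h j
    choose d hd using ex
    exact ⟨{ desc := d, fac := hd,
             uniq := fun s m hm => inj _ _ _ fun j => (hm j).trans (hd s j).symm }⟩⟩

lemma exists_lift (X : Discrete J ⥤ HomotopyCategory C c) :
    ∃ (K : Discrete J ⥤ HomologicalComplex C c),
      Nonempty (K ⋙ HomotopyCategory.quotient C c ≅ X) := by
  choose K hK using fun j => HomotopyCategory.quotient_obj_surjective (X.obj j)
  exact ⟨Discrete.functor fun j => K ⟨j⟩, ⟨Discrete.natIso fun j => eqToIso (hK j)⟩⟩

lemma hasCoprod : HasColimitsOfShape (Discrete J) (HomotopyCategory C c) where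
  has_colimit X := by
    obtain ⟨K, ⟨e⟩⟩ := exists_lift c X
    have := quotient_preserves (C := C) c (J := J)
    exact hasColimit_of_iso e.symm
end

section
variable {C : Type*} [Category C] [Abelian C] {ι : Type*} (c : ComplexShape ι)
  {J : Type*} [HasColimitsOfShape (Discrete J) C] [HasExactColimitsOfShape (Discrete J) C]

lemma quasiIso_stable :
    (HomotopyCategory.quasiIso C c).IsStableUnderColimitsOfShape (Discrete J) where
  condition X Y a b ha hb f hf φ hφ := by
    have := quotient_preserves (C := C) c (J := J)
    obtain ⟨K, ⟨eK⟩⟩ := exists_lift c X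
    obtain ⟨L, ⟨eL⟩⟩ := exists_lift c Y
    choose g hg using fun j => (HomotopyCategory.quotient C c).map_surjective
      (eK.hom.app j ≫ f.app j ≫ eL.inv.app j)
    have nat : ∀ ⦃i j⦄ (h : i ⟶ j), K.map h ≫ g j = g i ≫ L.map h := by
        rintro ⟨i⟩ ⟨j⟩ ⟨⟨h⟩⟩
        dsimp only at h
        subst h
        change K.map (𝟙 _) ≫ _ = _ ≫ L.map (𝟙 _)
        simp
    let g' : K ⟶ L := { app := g, naturality := nat }
    have hg' : ∀ j, QuasiIso (g'.app j) := fun j => by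
      rw [← HomologicalComplex.mem_quasiIso_iff, ← HomotopyCategory.quotient_map_mem_quasiIso_iff]
      change HomotopyCategory.quasiIso C c ((HomotopyCategory.quotient C c).map (g j))
      rw [hg]
      exact (MorphismProperty.cancel_left_of_respectsIso _ _ _).2
        ((MorphismProperty.cancel_right_of_respectsIso _ _ _).2 (hf j))
    let q := HomotopyCategory.quotient C c
    have h1 : QuasiIso (colimMap g') := quasiIso_colim c g' hg' _ _ (colimit.isColimit K)
      (colimit.isColimit L) _ (fun j => ι_colimMap g' j)
    rw [← HomologicalComplex.mem_quasiIso_iff,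
      ← HomotopyCategory.quotient_map_mem_quasiIso_iff] at h1
    let hK := isColimitOfPreserves q (colimit.isColimit K)
    let hL := isColimitOfPreserves q (colimit.isColimit L)
    refine ((HomotopyCategory.quasiIso C c).arrow_mk_iso_iff (Arrow.isoMk
      (hK.coconePointsIsoOfNatIso ha eK) (hL.coconePointsIsoOfNatIso hb eL) ?_)).1 h1
    refine hK.hom_ext fun j => ?_
    dsimp only [Arrow.mk_hom]
    have e1 : (q.mapCocone (colimit.cocone K)).ι.app j ≫ q.map (colimMap g') =
      (eK.hom.app j ≫ f.app j ≫ eL.inv.app j) ≫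
        (q.mapCocone (colimit.cocone L)).ι.app j := by
      rw [← hg]
      exact (q.map_comp _ _).symm.trans ((congrArg q.map (ι_colimMap g' j)).trans (q.map_comp _ _))
    erw [IsColimit.comp_coconePointsIsoOfNatIso_hom_assoc, reassoc_of% e1,
      IsColimit.comp_coconePointsIsoOfNatIso_hom, hφ]
    simp
end

section
variable {C D : Type*} [Category C] [Category D] [Preadditive C] [Preadditive D]

lemma loc_preserves (W : MorphismProperty C) (L : C ⥤ D) [L.IsLocalization W] [L.Additive]
    [W.HasLeftCalculusOfFractions] [W.HasRightCalculusOfFractions] {J : Type*}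
    [HasColimitsOfShape (Discrete J) C] [W.IsStableUnderColimitsOfShape (Discrete J)] :
    PreservesColimitsOfShape (Discrete J) L where
  preservesColimit {F} := ⟨fun {a} ha => by
    have := Localization.essSurj L W
    have inj : ∀ (Z : C) (f : L.obj a.pt ⟶ L.obj Z), (∀ j, L.map (a.ι.app j) ≫ f = 0) →
        f = 0 := fun Z f hf => by
      obtain ⟨φ, hφ⟩ := Localization.exists_leftFraction L W f
      obtain ⟨Z', g, s, hs, rfl⟩ := φ.cases
      have : IsIso (L.map s) := Localization.inverts L W _ hs
      have hfs : f ≫ L.map s = L.map g := by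
        rw [hφ]; exact MorphismProperty.LeftFraction.map_comp_map_s _ _ _
      have h0 : ∀ j, L.map (a.ι.app j ≫ g) = L.map 0 := fun j => by
        rw [L.map_comp, ← hfs, reassoc_of% (hf j), zero_comp, L.map_zero]
      simp only [MorphismProperty.map_eq_iff_precomp L W] at h0
      choose X' t ht ht0 using h0
      let t' : Discrete.functor (fun j => X' ⟨j⟩) ⟶ F := Discrete.natTrans fun j => t j
      let τ : colimit (Discrete.functor (fun j => X' ⟨j⟩)) ⟶ a.pt :=
        (colimit.isColimit _).map a t'
      have hτ' : ∀ j, colimit.ι (Discrete.functor (fun j => X' ⟨j⟩)) j ≫ τ =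
          t j ≫ a.ι.app j := fun j => (colimit.isColimit _).ι_map a t' j
      have hτ : W τ := MorphismProperty.IsStableUnderColimitsOfShape.condition
        _ _ _ _ (colimit.isColimit _) ha t' (fun j => ht j) τ hτ'
      have h2 : τ ≫ g = 0 := colimit.hom_ext fun j => by
        rw [reassoc_of% (hτ' j), ht0, comp_zero, comp_zero]
      have : IsIso (L.map τ) := Localization.inverts L W _ hτ
      rw [← cancel_mono (L.map s), hfs, zero_comp, ← cancel_epi (L.map τ), ← L.map_comp, h2,
        L.map_zero, comp_zero]
    have surj : ∀ (Z : C) (f : ∀ j, L.obj (F.obj j) ⟶ L.obj Z),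
        ∃ g : L.obj a.pt ⟶ L.obj Z, ∀ j, L.map (a.ι.app j) ≫ g = f j := fun Z f => by
      choose φ hφ using fun j => Localization.exists_rightFraction L W (f j)
      let t' : Discrete.functor (fun j => (φ ⟨j⟩).X') ⟶ F := Discrete.natTrans fun j => (φ j).s
      let τ : colimit (Discrete.functor (fun j => (φ ⟨j⟩).X')) ⟶ a.pt :=
        (colimit.isColimit _).map a t'
      have hτ' : ∀ j, colimit.ι (Discrete.functor (fun j => (φ ⟨j⟩).X')) j ≫ τ =
          (φ j).s ≫ a.ι.app j := fun j => (colimit.isColimit _).ι_map a t' j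
      have hτ : W τ := MorphismProperty.IsStableUnderColimitsOfShape.condition
        _ _ _ _ (colimit.isColimit _) ha t' (fun j => (φ j).hs) τ hτ'
      let g : colimit (Discrete.functor (fun j => (φ ⟨j⟩).X')) ⟶ Z :=
        colimit.desc _ (Cocone.mk Z (Discrete.natTrans fun j => (φ j).f))
      have hg : ∀ j, colimit.ι (Discrete.functor (fun j => (φ ⟨j⟩).X')) j ≫ g = (φ j).f :=
        fun j => colimit.ι_desc _ _
      have : IsIso (L.map τ) := Localization.inverts L W _ hτ
      refine ⟨inv (L.map τ) ≫ L.map g, fun j => ?_⟩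
      have : IsIso (L.map (φ j).s) := Localization.inverts L W _ (φ j).hs
      rw [← cancel_epi (L.map (φ j).s), hφ j, MorphismProperty.RightFraction.map_s_comp_map,
        ← L.map_comp_assoc, ← hτ', L.map_comp_assoc, IsIso.hom_inv_id_assoc, ← L.map_comp, hg]
    have ex : ∀ s : Cocone (F ⋙ L), ∃ f : L.obj a.pt ⟶ s.pt,
          ∀ j, L.map (a.ι.app j) ≫ f = s.ι.app j := fun s => by
      let e := L.objObjPreimageIso s.pt
      obtain ⟨g, hg⟩ := surj _ (fun j => s.ι.app j ≫ e.inv)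
      exact ⟨g ≫ e.hom, fun j => by rw [reassoc_of% (hg j), e.inv_hom_id]; exact Category.comp_id _⟩
    choose d hd using ex
    refine ⟨{ desc := d, fac := hd, uniq := fun s m hm => ?_ }⟩
    · let e := L.objObjPreimageIso s.pt
      rw [← sub_eq_zero, ← cancel_mono e.inv, zero_comp]
      refine inj _ _ fun j => ?_
      have h3 : L.map (a.ι.app j) ≫ m = s.ι.app j := hm j
      erw [← Category.assoc, Preadditive.comp_sub, hd, h3, sub_self, zero_comp]⟩
end
end Aux

/-- If `C` is an abelian category with exact small coproducts (AB4), then the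
localization functor from the homotopy category of unbounded cochain complexes to the
unbounded derived category preserves arbitrary small coproducts. -/
theorem DerivedCategory.Qh_preservesCoproducts_of_AB4
    {C : Type u} [Category.{v} C] [Abelian C] [HasCoproducts.{v} C] [AB4 C]
    [HasDerivedCategory.{w} C] (J : Type v) :
    PreservesColimitsOfShape (Discrete J) (DerivedCategory.Qh (C := C)) := by
  have h1 := Aux.hasCoprod (C := C) (ComplexShape.up ℤ) (J := J)
  have h2 := Aux.quasiIso_stable (C := C) (ComplexShape.up ℤ) (J := J)
  exact Aux.loc_preserves (HomotopyCategory.quasiIso C (ComplexShape.up ℤ)) DerivedCategory.Qh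
end
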